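/- Two words u, v ∈ A* are Baxter-equivalent if and only if their P-symbols coincide: u ≡_B v iff P(u) = P(v). -/

import Mathlib

open scoped Classical

/-- Baxter adjacency relations on words over the alphabet of natural numbers. -/
def BaxterAdj (w w' : List ℕ) : Prop :=
  (∃ (a b c d : ℕ) (u v : List ℕ), a ≤ b ∧ b < c ∧ c ≤ d ∧
      w = c :: (u ++ a :: d :: (v ++ [b])) ∧ w' = c :: (u ++ d :: a :: (v ++ [b]))) ∨
  (∃ (a b c d : ℕ) (u v : List ℕ), a < b ∧ b ≤ c ∧ c < d ∧
      w = b :: (u ++ d :: a :: (v ++ [c])) ∧ w' = b :: (u ++ a :: d :: (v ++ [c])))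

/-- One rewriting step: an adjacency applied inside a word (congruence context). -/
def BaxterStep (w w' : List ℕ) : Prop :=
  ∃ (p s u v : List ℕ), BaxterAdj u v ∧ w = p ++ u ++ s ∧ w' = p ++ v ++ s

/-- The Baxter congruence: the equivalence generated by the Baxter steps. -/
def BaxterEquiv : List ℕ → List ℕ → Prop := Relation.EqvGen BaxterStep

/-- Sylvester adjacency: a c u b ≡ c a u b when a ≤ b < c. -/
def SylvAdj (w w' : List ℕ) : Prop :=
  ∃ (a b c : ℕ) (u : List ℕ), a ≤ b ∧ b < c ∧
    w = a :: c :: (u ++ [b]) ∧ w' = c :: a :: (u ++ [b])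

def SylvStep (w w' : List ℕ) : Prop :=
  ∃ (p s u v : List ℕ), SylvAdj u v ∧ w = p ++ u ++ s ∧ w' = p ++ v ++ s

def SylvEquiv : List ℕ → List ℕ → Prop := Relation.EqvGen SylvStep

/-- #-sylvester adjacency: b u a c ≡ b u c a when a < b ≤ c. -/
def SylvHAdj (w w' : List ℕ) : Prop :=
  ∃ (a b c : ℕ) (u : List ℕ), a < b ∧ b ≤ c ∧
    w = b :: (u ++ [a, c]) ∧ w' = b :: (u ++ [c, a])

def SylvHStep (w w' : List ℕ) : Prop :=
  ∃ (p s u v : List ℕ), SylvHAdj u v ∧ w = p ++ u ++ s ∧ w' = p ++ v ++ s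

def SylvHEquiv : List ℕ → List ℕ → Prop := Relation.EqvGen SylvHStep

/-- The standardized word of `u`: position `i` receives the rank of the letter `u i`
(ties broken from left to right), ranks starting at `1`. -/
def std (u : List ℕ) : List ℕ :=
  (List.range u.length).map fun i =>
    ((List.range u.length).filter fun j =>
      decide (u.getD j 0 < u.getD i 0 ∨ (u.getD j 0 = u.getD i 0 ∧ j < i))).length + 1

/-- The maximal letter of a word. -/
def wordMax (u : List ℕ) : ℕ := u.foldr max 0

/-- The Schützenberger transformation: reverse and complement each letter w.r.t. max + 1. -/
def schutz (u : List ℕ) : List ℕ := u.reverse.map fun x => wordMax u + 1 - x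

/-- Labeled binary trees. -/
inductive BT where
  | leaf : BT
  | node : BT → ℕ → BT → BT
deriving DecidableEq

/-- Leaf insertion into a left binary search tree. -/
def leafInsL : BT → ℕ → BT
  | .leaf, a => .node .leaf a .leaf
  | .node l b r, a => if a < b then .node (leafInsL l a) b r else .node l b (leafInsL r a)

/-- Leaf insertion into a right binary search tree. -/
def leafInsR : BT → ℕ → BT
  | .leaf, a => .node .leaf a .leaf
  | .node l b r, a => if a ≤ b then .node (leafInsR l a) b r else .node l b (leafInsR r a)

/-- The lower restricted tree `T_{≤ a}` of a right binary search tree. -/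
def splitLE : BT → ℕ → BT
  | .leaf, _ => .leaf
  | .node l b r, a => if b ≤ a then .node l b (splitLE r a) else splitLE l a

/-- The higher restricted tree `T_{> a}` of a right binary search tree. -/
def splitGT : BT → ℕ → BT
  | .leaf, _ => .leaf
  | .node l b r, a => if b ≤ a then splitGT r a else .node (splitGT l a) b r

/-- Root insertion into a right binary search tree. -/
def rootIns (t : BT) (a : ℕ) : BT := .node (splitLE t a) a (splitGT t a)

/-- The left tree of the P-symbol: leaf insertions from left to right. -/
def insL (u : List ℕ) : BT := u.foldl leafInsL .leaf

/-- The right tree of the P-symbol: root insertions from left to right. -/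
def insR (u : List ℕ) : BT := u.foldl rootIns .leaf

/-- The P-symbol of a word. -/
def Psymb (u : List ℕ) : BT × BT := (insL u, insR u)

/-- Unlabeled binary trees. -/
inductive UBT where
  | leaf : UBT
  | node : UBT → UBT → UBT
deriving DecidableEq

/-- The shape of a labeled binary tree. -/
def shape : BT → UBT
  | .leaf => .leaf
  | .node l _ r => .node (shape l) (shape r)

/-- The shape of the P-symbol of a word. -/
def Pshape (u : List ℕ) : UBT × UBT := (shape (insL u), shape (insR u))

/-- Number of internal nodes. -/
def sizeU : UBT → ℕ
  | .leaf => 0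
  | .node l r => sizeU l + sizeU r + 1

/-- Orientations of the leaves, from left to right: `true` means right-oriented
(the leaf is the right child of its parent); the parameter is the orientation
assigned if the tree is reduced to a leaf. -/
def loU : UBT → Bool → List Bool
  | .leaf, b => [b]
  | .node l r, _ => loU l false ++ loU r true

/-- Leaf orientations of a labeled binary tree. -/
def loB : BT → Bool → List Bool
  | .leaf, b => [b]
  | .node l _ r, _ => loB l false ++ loB r true

/-- The canopy: orientations of the leaves except the first and the last one. -/
def canU (t : UBT) : List Bool := ((loU t false).drop 1).dropLast

/-- A pair of twin binary trees: same number of nodes and complementary canopies. -/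
def IsTwin (J : UBT × UBT) : Prop :=
  sizeU J.1 = sizeU J.2 ∧ (canU J.1).length = (canU J.2).length ∧
    ∀ i < (canU J.1).length, (canU J.1).getD i false ≠ (canU J.2).getD i false

/-- `σ` is (the word of) a permutation of `{1, …, n}`. -/
def IsPerm (n : ℕ) (σ : List ℕ) : Prop := σ.Perm (List.range' 1 n)

/-- Covering-type step of the right permutohedron (weak) order: exchange of two
adjacent letters `a < b`. -/
def PermutoStep (σ ν : List ℕ) : Prop :=
  ∃ (p s : List ℕ) (a b : ℕ), a < b ∧ σ = p ++ a :: b :: s ∧ ν = p ++ b :: a :: s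

/-- The right permutohedron (weak) order. -/
def PermutoLe : List ℕ → List ℕ → Prop := Relation.ReflTransGen PermutoStep

/-- Baxter permutations: avoiding the generalized patterns 2-41-3 and 3-14-2. -/
def IsBaxterPerm (σ : List ℕ) : Prop :=
  ∀ i j k, i < j → j + 1 < k → k < σ.length →
    ¬(σ.getD (j+1) 0 < σ.getD i 0 ∧ σ.getD i 0 < σ.getD k 0 ∧ σ.getD k 0 < σ.getD j 0) ∧
    ¬(σ.getD j 0 < σ.getD k 0 ∧ σ.getD k 0 < σ.getD i 0 ∧ σ.getD i 0 < σ.getD (j+1) 0)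

/-!
The left tree of `P(u)` is the search tree of `u` in which equal letters go right, and the right
tree is the search tree of the reversal of `u` in which equal letters go left: root insertion of `a`
splits the tree just as having `a` as first letter splits the word.

Two adjacent letters can be exchanged without changing a search tree as soon as an earlier letter
sends them to different sides. Applied to both trees, this says that the P-symbol allows the
exchange when one separating letter stands before the pair and another one after it, and these are
exactly the Baxter moves. Conversely, if two words have the same search tree but order two letters
differently, then some earlier letter separates them. So when `P(u) = P(v)`, each letter of `v` in
turn can be moved by Baxter moves through `u` to the position it has in `v`.
-/

theorem list_filter_induction {α : Type*} {motive : List α → Prop} (nil : motive [])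
    (cons : ∀ b w, (∀ q : α → Bool, motive (w.filter q)) → motive (b :: w)) :
    ∀ w, motive w
  | [] => nil
  | b :: w => cons b w fun q => list_filter_induction nil cons (w.filter q)
termination_by w => w.length
decreasing_by exact Nat.lt_succ_of_le (List.length_filter_le q w)

/-- A rule for branching in a binary search tree: `L x b` says that the letter `x` goes to the left
of a node labeled `b`. Smaller letters go left and larger ones right; the rule decides about ties,
so that `<` gives left binary search trees and `≤` gives right ones. -/
structure IsBranching (L : ℕ → ℕ → Prop) : Prop where
  of_lt : ∀ {x b}, x < b → L x b
  le : ∀ {x b}, L x b → x ≤ b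

theorem isBranching_lt : IsBranching (· < ·) := ⟨id, le_of_lt⟩

theorem isBranching_le : IsBranching (· ≤ ·) := ⟨le_of_lt, id⟩

namespace IsBranching

variable {L : ℕ → ℕ → Prop}

theorem le_of_not (hL : IsBranching L) {x b : ℕ} (h : ¬L x b) : b ≤ x :=
  not_lt.mp fun hlt => h (hL.of_lt hlt)

theorem mono (hL : IsBranching L) {x y b : ℕ} (hxy : x ≤ y) (hy : L y b) : L x b := by
  rcases hxy.eq_or_lt with rfl | hlt
  · exact hy
  · exact hL.of_lt (hlt.trans_le (hL.le hy))

end IsBranching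

/-- Leaf insertion into a binary search tree under the branching rule `L`, the common form of
`leafInsL` and `leafInsR`. -/
def leafIns (L : ℕ → ℕ → Prop) [DecidableRel L] : BT → ℕ → BT
  | .leaf, a => .node .leaf a .leaf
  | .node l b r, a => if L a b then .node (leafIns L l a) b r else .node l b (leafIns L r a)

/-- The binary search tree of a word under the branching rule `L`: its letters are leaf-inserted
from left to right into the empty tree. -/
def searchTree (L : ℕ → ℕ → Prop) [DecidableRel L] (w : List ℕ) : BT := w.foldl (leafIns L) .leaf

section SearchTree

variable {L : ℕ → ℕ → Prop} [DecidableRel L]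

theorem searchTree_nil : searchTree L [] = .leaf := rfl

theorem foldl_leafIns_node (w : List ℕ) (l r : BT) (b : ℕ) :
    w.foldl (leafIns L) (.node l b r) =
      .node ((w.filter (L · b)).foldl (leafIns L) l) b
        ((w.filter (!L · b)).foldl (leafIns L) r) := by
  induction w generalizing l r with
  | nil => rfl
  | cons a w ih => by_cases h : L a b <;> simp [leafIns, h, ih]

theorem searchTree_cons (b : ℕ) (w : List ℕ) :
    searchTree L (b :: w) =
      .node (searchTree L (w.filter (L · b))) b (searchTree L (w.filter (!L · b))) :=
  foldl_leafIns_node w .leaf .leaf b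

theorem searchTree_cons_inj {b c : ℕ} {u v : List ℕ} :
    searchTree L (b :: u) = searchTree L (c :: v) ↔
      searchTree L (u.filter (L · b)) = searchTree L (v.filter (L · c)) ∧ b = c ∧
        searchTree L (u.filter (!L · b)) = searchTree L (v.filter (!L · c)) := by
  rw [searchTree_cons, searchTree_cons, BT.node.injEq]

theorem perm_of_searchTree_eq {u v : List ℕ} (h : searchTree L u = searchTree L v) :
    u.Perm v := by
  induction u using list_filter_induction generalizing v with
  | nil =>
    cases v with
    | nil => rfl
    | cons => simp [searchTree_nil, searchTree_cons] at h
  | cons b u ih =>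
    cases v with
    | nil => simp [searchTree_nil, searchTree_cons] at h
    | cons c v =>
      obtain ⟨hleft, rfl, hright⟩ := searchTree_cons_inj.mp h
      have split (w : List ℕ) : (w.filter (L · b) ++ w.filter (!L · b)).Perm w := 
        List.filter_append_perm (L · b) w
      exact .cons b ((split u).symm.trans (((ih _ hleft).append (ih _ hright)).trans (split v)))

theorem searchTree_swap (hL : IsBranching L) {a c d : ℕ} (hac : L a c) (hdc : ¬L d c)
    {p : List ℕ} (hc : c ∈ p) (s : List ℕ) :
    searchTree L (p ++ a :: d :: s) = searchTree L (p ++ d :: a :: s) := by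
  induction p using list_filter_induction generalizing s with
  | nil => simp at hc
  | cons b p ih =>
    rw [List.cons_append, List.cons_append, searchTree_cons_inj]
    by_cases hab : L a b <;> by_cases hdb : L d b
    · have hcp : c ∈ p := (List.mem_cons.mp hc).resolve_left (by rintro rfl; exact hdc hdb)
      have hcb : L c b := hL.mono (hL.le_of_not hdc) hdb
      simp [hab, hdb, ih (L · b) (List.mem_filter.mpr ⟨hcp, by simpa using hcb⟩)]
    · simp [hab, hdb]
    · simp [hab, hdb]
    · have hcp : c ∈ p := (List.mem_cons.mp hc).resolve_left (by rintro rfl; exact hab hac)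
      have hcb : ¬L c b := fun hcb => hab (hL.mono (hL.le hac) hcb)
      simp [hab, hdb, ih (!L · b) (List.mem_filter.mpr ⟨hcp, by simpa using hcb⟩)]

/-- The inequalities on counts say that some occurrence of `y` follows the displayed `z` in the
first word, whereas the same occurrences of `y` and `z` stand in the other order in the second. -/
theorem exists_separator_of_searchTree_eq {y z : ℕ} {p s w t : List ℕ}
    (h : searchTree L (p ++ z :: s) = searchTree L (w ++ t))
    (hy : p.count y < w.count y) (hz : w.count z ≤ p.count z) :
    ∃ c ∈ p, ¬(L y c ↔ L z c) := by
  induction p using list_filter_induction generalizing s w t with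
  | nil =>
    cases w with
    | nil => simp at hy
    | cons b w =>
      obtain ⟨-, rfl, -⟩ := searchTree_cons_inj.mp h
      simp at hz
  | cons b p ih =>
    cases w with
    | nil => simp at hy
    | cons b' w =>
      obtain ⟨hleft, rfl, hright⟩ := searchTree_cons_inj.mp h
      by_cases hb : L y b ↔ L z b
      swap
      · exact ⟨b, List.mem_cons_self, hb⟩
      simp only [List.count_cons, add_lt_add_iff_right, add_le_add_iff_right] at hy hz
      suffices ∃ q : ℕ → Bool, ∃ c ∈ p.filter q, ¬(L y c ↔ L z c) by
        obtain ⟨q, c, hc, hsep⟩ := this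
        exact ⟨c, List.mem_cons_of_mem b (List.mem_of_mem_filter hc), hsep⟩
      by_cases hyb : L y b
      · have hzb : L z b := hb.mp hyb
        refine ⟨(L · b), ih _ (by simpa [hzb] using hleft) ?_ ?_⟩ <;>
          simpa [List.count_filter, hyb, hzb]
      · have hzb : ¬L z b := mt hb.mpr hyb
        refine ⟨(!L · b), ih _ (by simpa [hzb] using hright) ?_ ?_⟩ <;>
          simpa [List.count_filter, hyb, hzb]

end SearchTree

section Insertion

variable {L : ℕ → ℕ → Prop} [DecidableRel L]

theorem leafInsL_eq_leafIns (t : BT) (a : ℕ) : leafInsL t a = leafIns (· < ·) t a := by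
  induction t with
  | leaf => rfl
  | node l b r ihl ihr => rw [leafInsL, leafIns, ihl, ihr]

theorem insL_eq_searchTree (u : List ℕ) : insL u = searchTree (· < ·) u := by
  have h : leafInsL = leafIns (· < ·) := funext₂ leafInsL_eq_leafIns
  rw [insL, searchTree, h]

theorem splitLE_searchTree (hL : IsBranching L) (u : List ℕ) (a : ℕ) :
    splitLE (searchTree L u) a = searchTree L (u.filter (· ≤ a)) := by
  induction u using list_filter_induction with
  | nil => rw [List.filter_nil, searchTree_nil, splitLE]
  | cons b u ih =>
    rw [searchTree_cons, splitLE]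
    by_cases hba : b ≤ a
    · have hle (x : ℕ) (hx : L x b) : x ≤ a := (hL.le hx).trans hba
      rw [if_pos hba, ih, List.filter_cons_of_pos (by simpa using hba), searchTree_cons]
      simp only [List.filter_filter]
      congr 2 <;> grind
    · have hleft (x : ℕ) (hx : x ≤ a) : L x b := hL.of_lt (hx.trans_lt (not_le.mp hba))
      rw [if_neg hba, ih, List.filter_cons_of_neg (by simpa using hba), List.filter_filter]
      exact congrArg _ (List.filter_congr fun x _ => by simpa using hleft x)

theorem splitGT_searchTree (hL : IsBranching L) (u : List ℕ) (a : ℕ) :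
    splitGT (searchTree L u) a = searchTree L (u.filter (!· ≤ a)) := by
  induction u using list_filter_induction with
  | nil => rw [List.filter_nil, searchTree_nil, splitGT]
  | cons b u ih =>
    rw [searchTree_cons, splitGT]
    by_cases hba : b ≤ a
    · have hle (x : ℕ) (hx : L x b) : x ≤ a := (hL.le hx).trans hba
      rw [if_pos hba, ih, List.filter_cons_of_neg (by simpa using hba), List.filter_filter]
      exact congrArg _ (List.filter_congr fun x _ => by simpa using fun h => mt (hle x) h.not_ge)
    · have hleft (x : ℕ) (hx : x ≤ a) : L x b := hL.of_lt (hx.trans_lt (not_le.mp hba))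
      rw [if_neg hba, ih, List.filter_cons_of_pos (by simpa using hba), searchTree_cons]
      simp only [List.filter_filter]
      congr 2 <;> grind

theorem rootIns_searchTree (w : List ℕ) (a : ℕ) :
    rootIns (searchTree (· ≤ ·) w) a = searchTree (· ≤ ·) (a :: w) := by
  rw [rootIns, splitLE_searchTree isBranching_le, splitGT_searchTree isBranching_le,
    searchTree_cons]

theorem insR_eq_searchTree (u : List ℕ) : insR u = searchTree (· ≤ ·) u.reverse := by
  rw [insR, ← List.foldr_reverse]
  induction u.reverse with
  | nil => rw [List.foldr_nil, searchTree_nil]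
  | cons a w ih => rw [List.foldr_cons, ih, rootIns_searchTree]

end Insertion

theorem Psymb_eq_iff {u v : List ℕ} :
    Psymb u = Psymb v ↔
      searchTree (· < ·) u = searchTree (· < ·) v ∧
        searchTree (· ≤ ·) u.reverse = searchTree (· ≤ ·) v.reverse := by
  simp only [Psymb, Prod.mk.injEq, insL_eq_searchTree, insR_eq_searchTree]

theorem perm_of_Psymb_eq {u v : List ℕ} (h : Psymb u = Psymb v) : u.Perm v :=
  perm_of_searchTree_eq (Psymb_eq_iff.mp h).1

theorem Psymb_swap {a b c d : ℕ} {p s : List ℕ} (hc : c ∈ p) (hb : b ∈ s)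
    (hac : a < c) (hcd : c ≤ d) (hab : a ≤ b) (hbd : b < d) :
    Psymb (p ++ a :: d :: s) = Psymb (p ++ d :: a :: s) := by
  refine Psymb_eq_iff.mpr ⟨searchTree_swap isBranching_lt hac hcd.not_gt hc s, ?_⟩
  simpa using
    (searchTree_swap isBranching_le hab hbd.not_ge (List.mem_reverse.mpr hb) p.reverse).symm

theorem BaxterStep.Psymb_eq {u v : List ℕ} (h : BaxterStep u v) : Psymb u = Psymb v := by
  obtain ⟨p, s, _, _, ⟨a, b, c, d, x, y, hab, hbc, hcd, rfl, rfl⟩ |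
    ⟨a, b, c, d, x, y, hab, hbc, hcd, rfl, rfl⟩, rfl, rfl⟩ := h
  · simpa using Psymb_swap (p := p ++ c :: x) (s := y ++ b :: s) (by simp) (by simp)
      (hab.trans_lt hbc) hcd hab (hbc.trans_le hcd)
  · simpa using (Psymb_swap (p := p ++ b :: x) (s := y ++ c :: s) (by simp) (by simp)
      hab (hbc.trans hcd.le) (hab.le.trans hbc) hcd).symm

theorem BaxterEquiv.Psymb_eq {u v : List ℕ} (h : BaxterEquiv u v) : Psymb u = Psymb v := by
  induction h with
  | rel _ _ h => exact h.Psymb_eq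
  | refl _ => rfl
  | symm _ _ _ ih => exact ih.symm
  | trans _ _ _ _ _ ih₁ ih₂ => exact ih₁.trans ih₂

theorem BaxterEquiv.refl (u : List ℕ) : BaxterEquiv u u :=
  Relation.EqvGen.refl u

theorem BaxterEquiv.symm {u v : List ℕ} (h : BaxterEquiv u v) : BaxterEquiv v u :=
  Relation.EqvGen.symm _ _ h

theorem BaxterEquiv.trans {u v w : List ℕ} (huv : BaxterEquiv u v) (hvw : BaxterEquiv v w) :
    BaxterEquiv u w :=
  Relation.EqvGen.trans _ _ _ huv hvw

theorem baxterEquiv_swap {a b c d : ℕ} {p s : List ℕ} (hc : c ∈ p) (hb : b ∈ s)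
    (hac : a < c) (hcd : c ≤ d) (hab : a ≤ b) (hbd : b < d) :
    BaxterEquiv (p ++ a :: d :: s) (p ++ d :: a :: s) := by
  obtain ⟨p₁, p₂, rfl⟩ := List.append_of_mem hc
  obtain ⟨s₁, s₂, rfl⟩ := List.append_of_mem hb
  rcases lt_or_ge b c with hbc | hcb
  · exact .rel _ _ ⟨p₁, s₂, _, _, .inl ⟨a, b, c, d, p₂, s₁, hab, hbc, hcd, rfl, rfl⟩,
      by simp, by simp⟩
  · exact .symm (.rel _ _ ⟨p₁, s₂, _, _,
      .inr ⟨a, c, b, d, p₂, s₁, hac, hcb, hbd, rfl, rfl⟩, by simp, by simp⟩)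

theorem baxterEquiv_swap_of_Psymb_eq {y z : ℕ} {p s w t : List ℕ}
    (h : Psymb (p ++ z :: y :: s) = Psymb (w ++ t))
    (hy : p.count y < w.count y) (hz : w.count z ≤ p.count z) :
    BaxterEquiv (p ++ z :: y :: s) (p ++ y :: z :: s) := by
  have hyz : y ≠ z := by rintro rfl; exact hy.not_ge hz
  have hys := (perm_of_Psymb_eq h).count_eq y
  have hzs := (perm_of_Psymb_eq h).count_eq z
  simp only [List.count_append, List.count_cons_self, List.count_cons_of_ne hyz,
    List.count_cons_of_ne hyz.symm] at hys hzs
  obtain ⟨hleft, hright⟩ := Psymb_eq_iff.mp h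
  obtain ⟨c, hc, hsepc⟩ := exists_separator_of_searchTree_eq hleft hy hz
  obtain ⟨b, hb, hsepb⟩ : ∃ b ∈ s.reverse, ¬(z ≤ b ↔ y ≤ b) :=
    exists_separator_of_searchTree_eq (s := z :: p.reverse) (w := t.reverse) (t := w.reverse)
      (by simpa using hright) (by simp only [List.count_reverse]; omega)
      (by simp only [List.count_reverse]; omega)
  rw [List.mem_reverse] at hb
  rcases hyz.lt_or_gt with hlt | hlt
  · exact (baxterEquiv_swap hc hb (by omega) (by omega) (by omega) (by omega)).symm
  · exact baxterEquiv_swap hc hb (by omega) (by omega) (by omega) (by omega)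

theorem baxterEquiv_move_of_Psymb_eq {y : ℕ} {w r s t : List ℕ} (hr : y ∉ r)
    (h : Psymb (w ++ r ++ y :: s) = Psymb (w ++ y :: t)) :
    BaxterEquiv (w ++ r ++ y :: s) (w ++ y :: (r ++ s)) := by
  induction r using List.reverseRecOn generalizing s with
  | nil => simpa using BaxterEquiv.refl _
  | append_singleton r z ih =>
    simp only [List.mem_append, List.mem_singleton, not_or] at hr
    have h' : Psymb (w ++ r ++ z :: y :: s) = Psymb (w ++ [y] ++ t) := by simpa using h
    have hswap : BaxterEquiv (w ++ r ++ z :: y :: s) (w ++ r ++ y :: z :: s) :=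
      baxterEquiv_swap_of_Psymb_eq h' (by simp [List.count_eq_zero_of_not_mem hr.1])
        (by simp [hr.2])
    have hmove := ih hr.1 (hswap.Psymb_eq.symm.trans (by simpa using h'))
    simpa using hswap.trans hmove

theorem baxterEquiv_of_Psymb_eq {w u v : List ℕ} (h : Psymb (w ++ u) = Psymb (w ++ v)) :
    BaxterEquiv (w ++ u) (w ++ v) := by
  have hperm : u.Perm v := (List.perm_append_left_iff w).mp (perm_of_Psymb_eq h)
  induction v generalizing w u with
  | nil => rw [hperm.eq_nil]; exact .refl _
  | cons y v ih =>
    obtain ⟨r, s, rfl, hr⟩ := List.eq_append_cons_of_mem (hperm.mem_iff.mpr List.mem_cons_self)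
    rw [← List.append_assoc] at h ⊢
    have hmove := baxterEquiv_move_of_Psymb_eq hr h
    have hrest : BaxterEquiv (w ++ [y] ++ (r ++ s)) (w ++ [y] ++ v) :=
      ih (by simpa using hmove.Psymb_eq.symm.trans h)
        (List.perm_middle.symm.trans hperm).cons_inv
    exact hmove.trans (by simpa using hrest)

/-- two words are Baxter-equivalent iff their P-symbols coincide. -/
theorem baxterEquiv_iff_Psymb_eq (u v : List ℕ) :
    BaxterEquiv u v ↔ Psymb u = Psymb v := by
  constructor
  · exact BaxterEquiv.Psymb_eq
  · exact baxterEquiv_of_Psymb_eq (w := [])
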